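/- Lemma 4: fix an iteration i (1 ≤ i ≤ ⌈m/2⌉) of Algorithm 2 run with the x-approval rule, and let s_k(c) be the total score of candidate c in F(p⃗ ∪ p⃗_M) after all k stages. Then for all u_1, u_2 ∈ U^i, if s_k(u_1) = s_k(u_2) + 1 then u_2 is preferred over u_1 by the fixed tie-breaking order; similarly, for all d_1, d_2 ∈ D^i, if s_k(d_1) = s_k(d_2) + 1 then d_2 is preferred over d_1 by the fixed tie-breaking order. -/

import Mathlib

open Finset
open scoped Classical

variable {O : Type*} [Fintype O] [DecidableEq O]

/-- A vote is a strict total order on the outcome set `O`, represented by its position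
function: `p o` is the number of outcomes that `o` is preferred over, so the most
preferred outcome has position `m - 1` and the least preferred position `0`. -/
def IsVote (p : O → ℕ) : Prop :=
  Function.Injective p ∧ ∀ o : O, p o < Fintype.card O

/-- The total score of candidate `c` under the scoring vector `sc` (`sc j` is the number
of points awarded to the candidate at position `j`) for the profile `P`. -/
def score (sc : ℕ → ℤ) (P : List (O → ℕ)) (c : O) : ℤ :=
  (P.map fun q => sc (q c)).sum

/-- The positional scoring rule used as a social welfare function: candidates are ordered
by decreasing total score, ties being broken by the fixed strict tie-breaking order `tb`
(a smaller `tb`-value means preferred by the tie-breaking order).  The output is again a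
position function: the position of `c` is the number of candidates ranked below `c`. -/
def swf (sc : ℕ → ℤ) (tb : O → ℕ) (P : List (O → ℕ)) : O → ℕ := fun c =>
  (univ.filter fun c' =>
      score sc P c' < score sc P c ∨ (score sc P c' = score sc P c ∧ tb c < tb c')).card

/-- `topSet p j = A^j(p)`, the set of the `j` most preferred outcomes of `p`. -/
def topSet (p : O → ℕ) (j : ℕ) : Finset O :=
  univ.filter fun o => Fintype.card O - j ≤ p o

/-- The least `j ≥ 1` for which `A^j(p_t) ∩ A^j(p_o)` is nonempty, i.e. the iteration at
which the Rational Compromise rule terminates. -/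
noncomputable def rcIndex (pt po : O → ℕ) : ℕ :=
  sInf {j | 1 ≤ j ∧ (topSet pt j ∩ topSet po j).Nonempty}

/-- The Rational Compromise bargaining rule: `A^j(p_t) ∩ A^j(p_o)` for the least `j ≥ 1`
making this intersection nonempty. -/
noncomputable def RC (pt po : O → ℕ) : Finset O :=
  topSet pt (rcIndex pt po) ∩ topSet po (rcIndex pt po)

/-- The `n` most preferred members of `S` according to the ranking `r`. -/
def topWithin (r : O → ℕ) (S : Finset O) (n : ℕ) : Finset O :=
  S.filter fun o => (S.filter fun o' => r o < r o').card < n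

/-- The `n` least preferred members of `S` according to the ranking `r`. -/
def botWithin (r : O → ℕ) (S : Finset O) (n : ℕ) : Finset O :=
  S.filter fun o => (S.filter fun o' => r o' < r o).card < n

/-- The vote built by the algorithms from a current ranking `r` and a set `H`:
the members of `H` occupy the `|H|` highest positions in reverse order of `r`
(the `r`-least preferred member of `H` is placed highest), and the members of `O ∖ H`
occupy the remaining lowest positions in reverse order of `r` (the `r`-most preferred
of them is placed lowest). -/
def buildVote (r : O → ℕ) (H : Finset O) : O → ℕ := fun o =>
  if o ∈ H then Fintype.card O - H.card + (H.filter fun h => r o < r h).card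
  else (univ.filter fun c => c ∉ H ∧ r o < r c).card

/-- `H^i` for the constructive algorithms: the preferred outcome `p` together with the
`i - 1` most preferred outcomes of `p_t` that do not belong to `A^i(p_o)`. -/
def Hset (pt po : O → ℕ) (p : O) (i : ℕ) : Finset O :=
  insert p (topWithin pt ((univ \ topSet po i).erase p) (i - 1))

/-- `H^i` for the destructive algorithms: `p*`, the most preferred outcome of `p_t` other
than `e` that belongs to `A^i(p_o)`, together with the `i - 1` most preferred outcomes of
`p_t` other than `e` and `p*`. -/
def HsetD (pt po : O → ℕ) (e : O) (i : ℕ) : Finset O :=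
  topWithin pt ((topSet po i).erase e) 1 ∪
    topWithin pt ((univ.erase e) \ topWithin pt ((topSet po i).erase e) 1) (i - 1)

/-- The manipulator profile built by Algorithm 2 (for a fixed iteration whose set is `H`)
after the given number of stages: at each stage one more vote is appended, built from the
current social ranking `F(p⃗ ∪ p⃗_M)`. -/
def stageProfile (sc : ℕ → ℤ) (tb : O → ℕ) (P : List (O → ℕ)) (H : Finset O) :
    ℕ → List (O → ℕ)
  | 0 => []
  | n + 1 =>
      stageProfile sc tb P H n ++
        [buildVote (swf sc tb (P ++ stageProfile sc tb P H n)) H]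

/-- The vote constructed by Algorithm 2 at stage `ℓ` (1-indexed). -/
def stageVote (sc : ℕ → ℤ) (tb : O → ℕ) (P : List (O → ℕ)) (H : Finset O) (ℓ : ℕ) :
    O → ℕ :=
  buildVote (swf sc tb (P ++ stageProfile sc tb P H (ℓ - 1))) H

/-- The sets `U^i_s`:  `U^i_0` consists of the member of `H^i` with the lowest position in
`p_t`, and `U^i_{s+1}` adds every candidate ranked above some member of `U^i_s` by the
stage-`l` vote (`1 ≤ l < k`) but below some member of `U^i_s` by the stage-`(l+1)` vote. -/
noncomputable def Uaux (sc : ℕ → ℤ) (tb : O → ℕ) (P : List (O → ℕ)) (pt : O → ℕ)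
    (H : Finset O) (k : ℕ) : ℕ → Finset O
  | 0 => botWithin pt H 1
  | s + 1 =>
      Uaux sc tb P pt H k s ∪
        univ.filter fun u =>
          ∃ l, 1 ≤ l ∧ l < k ∧
            (∃ u' ∈ Uaux sc tb P pt H k s,
              stageVote sc tb P H l u' < stageVote sc tb P H l u) ∧
            (∃ u' ∈ Uaux sc tb P pt H k s,
              stageVote sc tb P H (l + 1) u < stageVote sc tb P H (l + 1) u')

/-- `U^i = ⋃ₛ U^i_s`. -/
noncomputable def Uset (sc : ℕ → ℤ) (tb : O → ℕ) (P : List (O → ℕ)) (pt : O → ℕ)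
    (H : Finset O) (k : ℕ) : Finset O :=
  univ.filter fun u => ∃ s, u ∈ Uaux sc tb P pt H k s

/-- The sets `D^i_s`: `D^i_0` consists of the member of `O ∖ H^i` with the highest position
in `p_t`, and `D^i_{s+1}` adds every candidate ranked below some member of `D^i_s` by the
stage-`l` vote (`1 ≤ l < k`) but above some member of `D^i_s` by the stage-`(l+1)` vote. -/
noncomputable def Daux (sc : ℕ → ℤ) (tb : O → ℕ) (P : List (O → ℕ)) (pt : O → ℕ)
    (H : Finset O) (k : ℕ) : ℕ → Finset O
  | 0 => topWithin pt (univ \ H) 1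
  | s + 1 =>
      Daux sc tb P pt H k s ∪
        univ.filter fun d =>
          ∃ l, 1 ≤ l ∧ l < k ∧
            (∃ d' ∈ Daux sc tb P pt H k s,
              stageVote sc tb P H l d < stageVote sc tb P H l d') ∧
            (∃ d' ∈ Daux sc tb P pt H k s,
              stageVote sc tb P H (l + 1) d' < stageVote sc tb P H (l + 1) d)

/-- `D^i = ⋃ₛ D^i_s`. -/
noncomputable def Dset (sc : ℕ → ℤ) (tb : O → ℕ) (P : List (O → ℕ)) (pt : O → ℕ)
    (H : Finset O) (k : ℕ) : Finset O :=
  univ.filter fun d => ∃ s, d ∈ Daux sc tb P pt H k s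

/-- The Borda scoring vector `(m-1, m-2, …, 1, 0)`: position `j` gets `j` points. -/
def bordaVec : ℕ → ℤ := fun j => (j : ℤ)

/-- The `x`-approval scoring vector for `m` candidates: the `x` highest positions get one
point, the rest get zero. -/
def approvalVec (m x : ℕ) : ℕ → ℤ := fun j => if m ≤ j + x then 1 else 0

/-- `sc` is a scoring vector for `m` candidates: `s_{m-1} ≥ … ≥ s_0 ≥ 0` and
`s_{m-1} > s_0`. -/
def IsScoringVector (m : ℕ) (sc : ℕ → ℤ) : Prop :=
  (∀ j, j + 1 < m → sc j ≤ sc (j + 1)) ∧ 0 ≤ sc 0 ∧ sc 0 < sc (m - 1)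

/-- Algorithm 1 (constructive single-voter manipulation) returns the vote `pa`:
the guard `pos(p, p_o) ≥ ⌈m/2⌉` holds and `pa` is the vote built at the first iteration
`i ∈ {1, …, ⌈m/2⌉}` at which the manipulation check succeeds. -/
def alg1Returns (sc : ℕ → ℤ) (tb : O → ℕ) (P : List (O → ℕ)) (po : O → ℕ) (p : O)
    (pa : O → ℕ) : Prop :=
  (Fintype.card O + 1) / 2 ≤ po p ∧
    ∃ i, 1 ≤ i ∧ i ≤ (Fintype.card O + 1) / 2 ∧
      pa = buildVote (swf sc tb P) (Hset (swf sc tb P) po p i) ∧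
      RC (swf sc tb (P ++ [pa])) po = {p} ∧
      ∀ j, 1 ≤ j → j < i →
        RC (swf sc tb (P ++ [buildVote (swf sc tb P) (Hset (swf sc tb P) po p j)])) po ≠
          {p}

/-- Algorithm 2 (constructive coalitional manipulation) run with `k` manipulators returns
the profile `PM`: the guard `pos(p, p_o) ≥ ⌈m/2⌉` holds and `PM` is the `k`-stage profile
built at the first iteration `i ∈ {1, …, ⌈m/2⌉}` at which the manipulation check succeeds. -/
def alg2Returns (sc : ℕ → ℤ) (tb : O → ℕ) (P : List (O → ℕ)) (po : O → ℕ) (p : O)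
    (k : ℕ) (PM : List (O → ℕ)) : Prop :=
  (Fintype.card O + 1) / 2 ≤ po p ∧
    ∃ i, 1 ≤ i ∧ i ≤ (Fintype.card O + 1) / 2 ∧
      PM = stageProfile sc tb P (Hset (swf sc tb P) po p i) k ∧
      RC (swf sc tb (P ++ PM)) po = {p} ∧
      ∀ j, 1 ≤ j → j < i →
        RC (swf sc tb (P ++ stageProfile sc tb P (Hset (swf sc tb P) po p j) k)) po ≠ {p}

/-- The modified Algorithm 1 (destructive single-voter manipulation) returns the vote
`pa`: the guard `pos(e, p_o) < ⌊m/2⌋` fails and `pa` is the vote built at the first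
iteration `i ∈ {1, …, ⌈m/2⌉}` at which `e` is excluded from the Rational Compromise. -/
def alg1ReturnsD (sc : ℕ → ℤ) (tb : O → ℕ) (P : List (O → ℕ)) (po : O → ℕ) (e : O)
    (pa : O → ℕ) : Prop :=
  Fintype.card O / 2 ≤ po e ∧
    ∃ i, 1 ≤ i ∧ i ≤ (Fintype.card O + 1) / 2 ∧
      pa = buildVote (swf sc tb P) (HsetD (swf sc tb P) po e i) ∧
      e ∉ RC (swf sc tb (P ++ [pa])) po ∧
      ∀ j, 1 ≤ j → j < i →
        e ∈ RC (swf sc tb (P ++ [buildVote (swf sc tb P) (HsetD (swf sc tb P) po e j)])) po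

/-- The modified Algorithm 2 (destructive coalitional manipulation) run with `k`
manipulators returns the profile `PM`: the guard `pos(e, p_o) < ⌊m/2⌋` fails and `PM` is
the `k`-stage profile built at the first iteration `i ∈ {1, …, ⌈m/2⌉}` at which `e` is
excluded from the Rational Compromise. -/
def alg2ReturnsD (sc : ℕ → ℤ) (tb : O → ℕ) (P : List (O → ℕ)) (po : O → ℕ) (e : O)
    (k : ℕ) (PM : List (O → ℕ)) : Prop :=
  Fintype.card O / 2 ≤ po e ∧
    ∃ i, 1 ≤ i ∧ i ≤ (Fintype.card O + 1) / 2 ∧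
      PM = stageProfile sc tb P (HsetD (swf sc tb P) po e i) k ∧
      e ∉ RC (swf sc tb (P ++ PM)) po ∧
      ∀ j, 1 ≤ j → j < i →
        e ∈ RC (swf sc tb (P ++ stageProfile sc tb P (HsetD (swf sc tb P) po e j) k)) po

/-- The set `U^i` arising from running the `k` stages of Algorithm 2 at iteration `i`. -/
noncomputable def UsetAlg (sc : ℕ → ℤ) (tb : O → ℕ) (P : List (O → ℕ)) (po : O → ℕ)
    (p : O) (i k : ℕ) : Finset O :=
  Uset sc tb P (swf sc tb P) (Hset (swf sc tb P) po p i) k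

/-- The set `D^i` arising from running the `k` stages of Algorithm 2 at iteration `i`. -/
noncomputable def DsetAlg (sc : ℕ → ℤ) (tb : O → ℕ) (P : List (O → ℕ)) (po : O → ℕ)
    (p : O) (i k : ℕ) : Finset O :=
  Dset sc tb P (swf sc tb P) (Hset (swf sc tb P) po p i) k

/-- The vote constructed at stage `ℓ` of iteration `i` of Algorithm 2. -/
def stageVoteAlg (sc : ℕ → ℤ) (tb : O → ℕ) (P : List (O → ℕ)) (po : O → ℕ)
    (p : O) (i ℓ : ℕ) : O → ℕ :=
  stageVote sc tb P (Hset (swf sc tb P) po p i) ℓ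

/-- `s_ℓ(c)`: the total score of candidate `c` in `F(p⃗ ∪ p⃗_M)` after stage `ℓ` of
iteration `i` of Algorithm 2. -/
def stageScoreAlg (sc : ℕ → ℤ) (tb : O → ℕ) (P : List (O → ℕ)) (po : O → ℕ)
    (p : O) (i ℓ : ℕ) (c : O) : ℤ :=
  score sc (P ++ stageProfile sc tb P (Hset (swf sc tb P) po p i) ℓ) c

/-- `F(p⃗ ∪ p⃗_M)` after stage `ℓ` of iteration `i` of Algorithm 2. -/
def stageSwfAlg (sc : ℕ → ℤ) (tb : O → ℕ) (P : List (O → ℕ)) (po : O → ℕ)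
    (p : O) (i ℓ : ℕ) : O → ℕ :=
  swf sc tb (P ++ stageProfile sc tb P (Hset (swf sc tb P) po p i) ℓ)

/-- The `(y + 1)`-st smallest value of an injective function on a finite set. -/
lemma exists_card_filter_lt_eq (S : Finset O) (f : O → ℤ) (hf : Set.InjOn f S) (y : ℕ)
    (hy : y < #S) : ∃ e ∈ S, #{c ∈ S | f c < f e} = y := by
  induction S using Finset.induction_on_max_value f with
  | empty => simp at hy
  | insert a s ha hmax ih =>
    have hlt : ∀ c ∈ s, f c < f a := fun c hc => lt_of_le_of_ne (hmax c hc) fun h =>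
      ha (hf (mem_insert_of_mem hc) (mem_insert_self a s) h ▸ hc)
    rw [card_insert_of_notMem ha] at hy
    rcases Nat.lt_succ_iff_lt_or_eq.1 hy with hy | rfl
    · obtain ⟨e, he, hcard⟩ := ih (hf.mono (by simp)) hy
      refine ⟨e, mem_insert_of_mem he, ?_⟩
      rwa [filter_insert, if_neg (hlt e he).not_gt]
    · refine ⟨a, mem_insert_self a s, ?_⟩
      rw [filter_insert, if_neg (lt_irrefl _), filter_true_of_mem hlt]

/-- At every step the `y` members of `S` with the lowest `K`-values gain `M`, while the other
members of `S` keep their value. -/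
def LiftsLowest (S : Finset O) (y : ℕ) (M : ℤ) (K : ℕ → O → ℤ) : Prop :=
  ∀ t, ∀ c ∈ S, K (t + 1) c =
    if #{c' ∈ S | K t c' < K t c} < y then K t c + M else K t c

/-- Lifting the `y` lowest members amounts to lifting everything below a threshold, which never
decreases and grows by less than `M` at each step. -/
lemma LiftsLowest.exists_threshold {S : Finset O} {y : ℕ} {M : ℤ} {K : ℕ → O → ℤ}
    (h : LiftsLowest S y M K) (hM : 0 < M) (hinj : ∀ t, Set.InjOn (K t) S) (hy : y < #S) :
    ∃ τ : ℕ → ℤ, (∀ t, τ t ≤ τ (t + 1)) ∧ (∀ t, τ (t + 1) < τ t + M) ∧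
      ∀ t, ∀ c ∈ S, K (t + 1) c = if K t c < τ t then K t c + M else K t c := by
  choose e heS he using fun t => exists_card_filter_lt_eq S (K t) (hinj t) y hy
  have hstep : ∀ t, ∀ c ∈ S,
      K (t + 1) c = if K t c < K t (e t) then K t c + M else K t c := by
    intro t c hc
    rw [h t c hc]
    congr 1
    rw [eq_iff_iff]
    constructor
    · intro hlt
      by_contra hge
      rw [← he t] at hlt
      refine hlt.not_ge (card_le_card fun d hd => ?_)
      simp only [mem_filter] at hd ⊢
      exact ⟨hd.1, by omega⟩
    · intro hlt
      rw [← he t]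
      refine card_lt_card (ssubset_iff_of_subset (fun d hd => ?_) |>.2 ⟨c, ?_, ?_⟩)
      · simp only [mem_filter] at hd ⊢
        exact ⟨hd.1, by omega⟩
      · simp [hc, hlt]
      · simp
  have hcard : ∀ t, #(insert (e t) {c ∈ S | K t c < K t (e t)}) = y + 1 := fun t => by
    rw [card_insert_of_notMem (by simp), he t]
  refine ⟨fun t => K t (e t), fun t => ?_, fun t => ?_, hstep⟩
  · by_contra! hlt
    have hsub : insert (e (t + 1)) {c ∈ S | K (t + 1) c < K (t + 1) (e (t + 1))} ⊆
        {c ∈ S | K t c < K t (e t)} := by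
      intro c hc
      simp only [mem_insert, mem_filter] at hc ⊢
      have hcS : c ∈ S := by rcases hc with rfl | hc; exacts [heS _, hc.1]
      have hle : K (t + 1) c ≤ K (t + 1) (e (t + 1)) := by
        rcases hc with rfl | hc; exacts [le_rfl, hc.2.le]
      refine ⟨hcS, ?_⟩
      have := hstep t c hcS
      split_ifs at this with hc' <;> omega
    have := card_le_card hsub
    rw [hcard, he] at this
    omega
  · by_contra! hge
    have hsub : insert (e t) {c ∈ S | K t c < K t (e t)} ⊆
        {c ∈ S | K (t + 1) c < K (t + 1) (e (t + 1))} := by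
      intro c hc
      simp only [mem_insert, mem_filter] at hc ⊢
      have hcS : c ∈ S := by rcases hc with rfl | hc; exacts [heS _, hc.1]
      have hle : K t c ≤ K t (e t) := by
        rcases hc with rfl | hc; exacts [le_rfl, hc.2.le]
      refine ⟨hcS, ?_⟩
      have := hstep t c hcS
      split_ifs at this with hc' <;> omega
    have := card_le_card hsub
    rw [hcard, he] at this
    omega

/-- There is a set `W` of candidates whose values at time `k` differ by less than `M`, which
contains any two candidates that have changed their relative order, and such that every other
candidate stays on one side of `W` at all times. -/
lemma LiftsLowest.exists_window {S : Finset O} {y : ℕ} {M : ℤ} {K : ℕ → O → ℤ}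
    (h : LiftsLowest S y M K) (hM : 0 < M) (hinj : ∀ t, Set.InjOn (K t) S) (k : ℕ) :
    ∃ W : Set O, (∀ a ∈ W, ∀ b ∈ W, K k a < K k b + M) ∧
      (∀ l < k, ∀ a ∈ S, ∀ b ∈ S, K l a < K l b → K (l + 1) b < K (l + 1) a →
        a ∈ W ∧ b ∈ W) ∧
      ∀ a ∈ S, a ∉ W →
        (∀ t ≤ k, ∀ w ∈ W, K t a < K t w) ∨ (∀ t ≤ k, ∀ w ∈ W, K t w < K t a) := by
  rcases le_or_gt #S y with hy | hy
  · have hstep : ∀ t, ∀ c ∈ S, K (t + 1) c = K t c + M := by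
      intro t c hc
      rw [h t c hc, if_pos]
      refine lt_of_lt_of_le (card_lt_card ?_) hy
      exact filter_ssubset.2 ⟨c, hc, lt_irrefl _⟩
    refine ⟨∅, by simp, fun l _ a ha b hb hab hba => ?_, by simp⟩
    rw [hstep l a ha, hstep l b hb] at hba
    omega
  obtain ⟨τ, hmono, hgrow, hstep⟩ := h.exists_threshold hM hinj hy
  rcases k with _ | n
  · exact ⟨∅, by simp, by simp, by simp⟩
  have hlow : ∀ c ∈ S, ∀ t t', t ≤ t' → τ t ≤ K (t + 1) c → τ t' ≤ K (t' + 1) c := by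
    intro c hc t t' htt' h0
    induction t', htt' using Nat.le_induction with
    | base => exact h0
    | succ t' _ ih =>
      have h1 := hstep (t' + 1) c hc
      have h2 := hgrow t'
      split_ifs at h1 <;> omega
  have hhigh : ∀ c ∈ S, ∀ t t', t ≤ t' → K (t + 1) c < τ t + M →
      K (t' + 1) c < τ t' + M := by
    intro c hc t t' htt' h0
    induction t', htt' using Nat.le_induction with
    | base => exact h0
    | succ t' _ ih =>
      have h1 := hstep (t' + 1) c hc
      have h2 := hmono t'
      split_ifs at h1 <;> omega
  refine ⟨{c | c ∈ S ∧ τ n ≤ K (n + 1) c ∧ K (n + 1) c < τ n + M}, ?_, ?_, ?_⟩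
  · rintro a ⟨-, -, ha⟩ b ⟨-, hb, -⟩
    omega
  · intro l hl a ha b hb hab hba
    have h1 := hstep l a ha
    have h2 := hstep l b hb
    have hln : l ≤ n := by omega
    refine ⟨⟨ha, hlow a ha l n hln ?_, hhigh a ha l n hln ?_⟩,
      ⟨hb, hlow b hb l n hln ?_, hhigh b hb l n hln ?_⟩⟩ <;>
    split_ifs at h1 h2 <;> omega
  · intro a ha haW
    by_cases hcase : K (n + 1) a < τ n
    · left
      rintro t ht w ⟨hw, hw1, -⟩
      have hrise : ∀ t ≤ n, K (t + 1) a = K t a + M := by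
        intro t ht
        have h1 := hstep t a ha
        by_contra hne
        rw [if_neg (fun hlt => hne (by rw [h1, if_pos hlt]))] at h1
        refine (hlow a ha t n ht ?_).not_gt hcase
        by_contra hlt
        exact hne (by rw [hstep t a ha, if_pos (by omega)])
      induction ht using Nat.decreasingInduction with
      | self => omega
      | of_succ t ht ih =>
        have h1 := hrise t (by omega)
        have h2 := hstep t w hw
        split_ifs at h2 <;> omega
    · right
      rintro t ht w ⟨hw, -, hw2⟩
      have haW' : τ n + M ≤ K (n + 1) a := by
        by_contra hlt
        exact haW ⟨ha, by omega, by omega⟩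
      have hstay : ∀ t ≤ n, K (t + 1) a = K t a := by
        intro t ht
        have h1 := hstep t a ha
        split_ifs at h1 with hlt
        · have := hhigh a ha t n ht (by omega)
          omega
        · exact h1
      induction ht using Nat.decreasingInduction with
      | self => omega
      | of_succ t ht ih =>
        have h1 := hstay t (by omega)
        have h2 := hstep t w hw
        split_ifs at h2 <;> omega

/-- A family grown from at most one candidate by adding candidates that pass from one side of
some member to the other side of some member ends up within a window of width `M`. -/
lemma LiftsLowest.lt_add_of_mem {S : Finset O} {y : ℕ} {M : ℤ} {K : ℕ → O → ℤ}
    (h : LiftsLowest S y M K) (hM : 0 < M) (hinj : ∀ t, Set.InjOn (K t) S) (k : ℕ)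
    (A : ℕ → Finset O) (hAS : ∀ s, A s ⊆ S) (hA0 : ∀ a ∈ A 0, ∀ b ∈ A 0, a = b)
    (hA : ∀ s, ∀ a ∈ A (s + 1), a ∈ A s ∨ ∃ l < k, ∃ b ∈ A s, ∃ c ∈ A s,
      (K l a < K l b ∧ K (l + 1) c < K (l + 1) a) ∨
      (K l b < K l a ∧ K (l + 1) a < K (l + 1) c)) (s : ℕ) :
    ∀ a ∈ A s, ∀ b ∈ A s, K k a < K k b + M := by
  obtain ⟨W, hW, hcross, hside⟩ := h.exists_window hM hinj k
  have key : A s ⊆ A 0 ∨ (A s : Set O) ⊆ W := by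
    induction s with
    | zero => exact Or.inl subset_rfl
    | succ s ih =>
      by_cases hsW : (A s : Set O) ⊆ W
      · right
        intro a ha
        rcases hA s a ha with ha' | ⟨l, hl, b, hb, c, hc, habc⟩
        · exact hsW ha'
        · by_contra haW
          rcases hside a (hAS _ ha) haW with hs | hs
          · have h1 := hs l hl.le b (hsW hb)
            have h2 := hs (l + 1) hl c (hsW hc)
            omega
          · have h1 := hs l hl.le b (hsW hb)
            have h2 := hs (l + 1) hl c (hsW hc)
            omega
      · left
        have hs0 : A s ⊆ A 0 := ih.resolve_right hsW
        intro a ha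
        rcases hA s a ha with ha' | ⟨l, hl, b, hb, c, hc, habc⟩
        · exact hs0 ha'
        · obtain rfl := hA0 b (hs0 hb) c (hs0 hc)
          have hbW : b ∈ W := by
            rcases habc with ⟨h1, h2⟩ | ⟨h1, h2⟩
            · exact (hcross l hl a (hAS _ ha) b (hAS _ hb) h1 h2).2
            · exact (hcross l hl b (hAS _ hb) a (hAS _ ha) h1 h2).1
          refine absurd (fun d hd => ?_) hsW
          rwa [hA0 d (hs0 hd) b (hs0 hb)]
  intro a ha b hb
  rcases key with hs | hs
  · rw [hA0 a (hs ha) b (hs hb)]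
    omega
  · exact hW a (hs ha) b (hs hb)

/-- An integer encoding of the pair (score, tie-breaking rank): for `M` larger than all values of
`tb`, comparing keys is comparing candidates in the social ranking. -/
def scoreKey (M : ℤ) (sc : ℕ → ℤ) (tb : O → ℕ) (P : List (O → ℕ)) (c : O) : ℤ :=
  M * score sc P c - tb c

lemma scoreKey_lt_iff {M : ℤ} {tb : O → ℕ} (hM : ∀ c, (tb c : ℤ) < M) (sc : ℕ → ℤ)
    (P : List (O → ℕ)) (c d : O) :
    scoreKey M sc tb P c < scoreKey M sc tb P d ↔
      score sc P c < score sc P d ∨ (score sc P c = score sc P d ∧ tb d < tb c) := by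
  have hc := hM c
  have hd := hM d
  unfold scoreKey
  rcases lt_trichotomy (score sc P c) (score sc P d) with hlt | heq | hgt
  · simp only [hlt, true_or, iff_true]
    nlinarith
  · simp only [heq, lt_irrefl, false_or, true_and]
    omega
  · simp only [hgt.not_gt, hgt.ne', false_and, or_false, iff_false, not_lt]
    nlinarith

lemma scoreKey_injective {M : ℤ} {tb : O → ℕ} (hM : ∀ c, (tb c : ℤ) < M)
    (htb : Function.Injective tb) (sc : ℕ → ℤ) (P : List (O → ℕ)) :
    Function.Injective (scoreKey M sc tb P) := by
  intro c d hcd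
  have h1 := (scoreKey_lt_iff hM sc P c d).not.1 hcd.not_lt
  have h2 := (scoreKey_lt_iff hM sc P d c).not.1 hcd.not_gt
  push Not at h1 h2
  have hs : score sc P c = score sc P d := le_antisymm h2.1 h1.1
  exact htb (le_antisymm (h1.2 hs) (h2.2 hs.symm))

lemma swf_lt_iff {M : ℤ} {tb : O → ℕ} (hM : ∀ c, (tb c : ℤ) < M) (sc : ℕ → ℤ)
    (P : List (O → ℕ)) (c d : O) :
    swf sc tb P c < swf sc tb P d ↔ scoreKey M sc tb P c < scoreKey M sc tb P d := by
  have hswf : ∀ a, swf sc tb P a =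
      #{b : O | scoreKey M sc tb P b < scoreKey M sc tb P a} := fun a => by
    simp only [swf, scoreKey_lt_iff hM]
  rw [hswf, hswf]
  constructor
  · intro hlt
    by_contra hge
    refine hlt.not_ge (card_le_card fun b hb => ?_)
    simp only [mem_filter, mem_univ, true_and] at hb ⊢
    omega
  · intro hlt
    refine card_lt_card (ssubset_iff_of_subset (fun b hb => ?_) |>.2 ⟨c, ?_, ?_⟩)
    · simp only [mem_filter, mem_univ, true_and] at hb ⊢
      omega
    · simpa using hlt
    · simp

lemma card_filter_lt_add_card_filter_gt (S : Finset O) (f : O → ℕ) (hf : Function.Injective f)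
    {o : O} (ho : o ∈ S) : #{c ∈ S | f c < f o} + #{c ∈ S | f o < f c} + 1 = #S := by
  rw [← card_union_of_disjoint, ← card_insert_of_notMem (a := o)]
  · congr 1
    ext c
    simp only [mem_insert, mem_union, mem_filter]
    constructor
    · rintro (rfl | hc | hc)
      exacts [ho, hc.1, hc.1]
    · intro hc
      rcases lt_trichotomy (f c) (f o) with h | h | h
      exacts [Or.inr (Or.inl ⟨hc, h⟩), Or.inl (hf h), Or.inr (Or.inr ⟨hc, h⟩)]
  · simp
  · refine disjoint_filter.2 fun c _ h1 h2 => ?_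
    omega

lemma filter_notMem_and_eq (r : O → ℕ) (H : Finset O) (o : O) :
    (univ.filter fun c => c ∉ H ∧ r o < r c) = {c ∈ univ \ H | r o < r c} := by
  ext c
  simp

lemma buildVote_lt_of_notMem_of_mem (r : O → ℕ) (H : Finset O) {a b : O} (ha : a ∉ H)
    (hb : b ∈ H) : buildVote r H a < buildVote r H b := by
  have hlt : #{c ∈ univ \ H | r a < r c} < #(univ \ H) :=
    card_lt_card (filter_ssubset.2 ⟨a, by simp [ha], lt_irrefl _⟩)
  rw [card_sdiff_of_subset (subset_univ H), card_univ] at hlt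
  simp only [buildVote, if_neg ha, if_pos hb, filter_notMem_and_eq]
  omega

lemma lt_of_buildVote_lt (r : O → ℕ) (H : Finset O) {a b : O} (hab : a ∈ H ↔ b ∈ H)
    (h : buildVote r H a < buildVote r H b) : r b < r a := by
  by_contra! hle
  refine h.not_ge ?_
  by_cases ha : a ∈ H
  · simp only [buildVote, if_pos ha, if_pos (hab.1 ha)]
    refine Nat.add_le_add_left (card_le_card fun c hc => ?_) _
    simp only [mem_filter] at hc ⊢
    exact ⟨hc.1, by omega⟩
  · simp only [buildVote, if_neg ha, if_neg (hab.not.1 ha)]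
    refine card_le_card fun c hc => ?_
    simp only [mem_filter] at hc ⊢
    exact ⟨hc.1, hc.2.1, by omega⟩

lemma approvalVec_buildVote_of_mem (x : ℕ) (r : O → ℕ) (hr : Function.Injective r)
    (H : Finset O) {o : O} (ho : o ∈ H) :
    approvalVec (Fintype.card O) x (buildVote r H o) =
      if #{c ∈ H | r c < r o} < x then 1 else 0 := by
  have h1 := card_filter_lt_add_card_filter_gt H r hr ho
  have h2 : #H ≤ Fintype.card O := card_le_univ H
  simp only [approvalVec, buildVote, if_pos ho]
  congr 1
  rw [eq_iff_iff]
  omega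

lemma approvalVec_buildVote_of_notMem (x : ℕ) (r : O → ℕ) (hr : Function.Injective r)
    (H : Finset O) {o : O} (ho : o ∉ H) :
    approvalVec (Fintype.card O) x (buildVote r H o) =
      if #{c ∈ univ \ H | r c < r o} < x - #H then 1 else 0 := by
  have h1 := card_filter_lt_add_card_filter_gt (univ \ H) r hr (o := o) (by simp [ho])
  have h2 : #H ≤ Fintype.card O := card_le_univ H
  rw [card_sdiff_of_subset (subset_univ H), card_univ] at h1
  simp only [approvalVec, buildVote, if_neg ho, filter_notMem_and_eq]
  congr 1
  rw [eq_iff_iff]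
  omega

/-- The keys of the candidates after `t` stages. -/
def stageKey (M : ℤ) (sc : ℕ → ℤ) (tb : O → ℕ) (P : List (O → ℕ)) (H : Finset O) (t : ℕ) :
    O → ℤ :=
  scoreKey M sc tb (P ++ stageProfile sc tb P H t)

lemma stageKey_succ (M : ℤ) (sc : ℕ → ℤ) (tb : O → ℕ) (P : List (O → ℕ)) (H : Finset O)
    (t : ℕ) (c : O) :
    stageKey M sc tb P H (t + 1) c = stageKey M sc tb P H t c +
      M * sc (buildVote (swf sc tb (P ++ stageProfile sc tb P H t)) H c) := by
  simp only [stageKey, scoreKey, stageProfile, score, List.map_append, List.sum_append,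
    List.map_cons, List.map_nil, List.sum_cons, List.sum_nil]
  ring

lemma swf_injective {tb : O → ℕ} (htb : Function.Injective tb) {M : ℤ}
    (hM : ∀ c, (tb c : ℤ) < M) (sc : ℕ → ℤ) (P : List (O → ℕ)) :
    Function.Injective (swf sc tb P) := by
  intro c d hcd
  have h1 := (swf_lt_iff hM sc P c d).not.1 hcd.not_lt
  have h2 := (swf_lt_iff hM sc P d c).not.1 hcd.not_gt
  exact scoreKey_injective hM htb sc P (by omega)

lemma liftsLowest_stageKey_of_mem (x : ℕ) {tb : O → ℕ} (htb : Function.Injective tb) {M : ℤ}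
    (hM : ∀ c, (tb c : ℤ) < M) (P : List (O → ℕ)) (H : Finset O) :
    LiftsLowest H x M (stageKey M (approvalVec (Fintype.card O) x) tb P H) := by
  intro t c hc
  have hfilter : {d ∈ H | swf (approvalVec (Fintype.card O) x) tb
        (P ++ stageProfile (approvalVec (Fintype.card O) x) tb P H t) d <
      swf (approvalVec (Fintype.card O) x) tb
        (P ++ stageProfile (approvalVec (Fintype.card O) x) tb P H t) c} =
      {d ∈ H | stageKey M (approvalVec (Fintype.card O) x) tb P H t d <
        stageKey M (approvalVec (Fintype.card O) x) tb P H t c} :=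
    filter_congr fun d _ => swf_lt_iff hM _ _ d c
  rw [stageKey_succ, approvalVec_buildVote_of_mem x _ (swf_injective htb hM _ _) H hc, hfilter]
  split_ifs <;> ring

lemma liftsLowest_stageKey_of_notMem (x : ℕ) {tb : O → ℕ} (htb : Function.Injective tb) {M : ℤ}
    (hM : ∀ c, (tb c : ℤ) < M) (P : List (O → ℕ)) (H : Finset O) :
    LiftsLowest (univ \ H) (x - #H) M
      (stageKey M (approvalVec (Fintype.card O) x) tb P H) := by
  intro t c hc
  have hfilter : {d ∈ univ \ H | swf (approvalVec (Fintype.card O) x) tb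
        (P ++ stageProfile (approvalVec (Fintype.card O) x) tb P H t) d <
      swf (approvalVec (Fintype.card O) x) tb
        (P ++ stageProfile (approvalVec (Fintype.card O) x) tb P H t) c} =
      {d ∈ univ \ H | stageKey M (approvalVec (Fintype.card O) x) tb P H t d <
        stageKey M (approvalVec (Fintype.card O) x) tb P H t c} :=
    filter_congr fun d _ => swf_lt_iff hM _ _ d c
  rw [stageKey_succ, approvalVec_buildVote_of_notMem x _ (swf_injective htb hM _ _) H
    (by simpa using hc), hfilter]
  split_ifs <;> ring

lemma stageKey_lt_of_stageVote_lt {tb : O → ℕ} {M : ℤ} (hM : ∀ c, (tb c : ℤ) < M)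
    (sc : ℕ → ℤ) (P : List (O → ℕ)) (H : Finset O) {t : ℕ} {a b : O} (hab : a ∈ H ↔ b ∈ H)
    (h : stageVote sc tb P H (t + 1) a < stageVote sc tb P H (t + 1) b) :
    stageKey M sc tb P H t b < stageKey M sc tb P H t a :=
  (swf_lt_iff hM sc _ b a).1 (lt_of_buildVote_lt _ H hab h)

lemma eq_of_mem_botWithin_one {r : O → ℕ} (hr : Function.Injective r) {S : Finset O} {a b : O}
    (ha : a ∈ botWithin r S 1) (hb : b ∈ botWithin r S 1) : a = b := by
  simp only [botWithin, mem_filter, Nat.lt_one_iff, card_eq_zero, filter_eq_empty_iff,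
    not_lt] at ha hb
  exact hr (le_antisymm (ha.2 hb.1) (hb.2 ha.1))

lemma eq_of_mem_topWithin_one {r : O → ℕ} (hr : Function.Injective r) {S : Finset O} {a b : O}
    (ha : a ∈ topWithin r S 1) (hb : b ∈ topWithin r S 1) : a = b := by
  simp only [topWithin, mem_filter, Nat.lt_one_iff, card_eq_zero, filter_eq_empty_iff,
    not_lt] at ha hb
  exact hr (le_antisymm (hb.2 ha.1) (ha.2 hb.1))

lemma Uaux_subset (sc : ℕ → ℤ) (tb : O → ℕ) (P : List (O → ℕ)) (pt : O → ℕ) (H : Finset O)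
    (k s : ℕ) : Uaux sc tb P pt H k s ⊆ H := by
  induction s with
  | zero => exact filter_subset _ _
  | succ s ih =>
    intro u hu
    simp only [Uaux, mem_union, mem_filter] at hu
    rcases hu with hu | ⟨-, l, -, -, ⟨u', hu', hlt⟩, -⟩
    · exact ih hu
    · by_contra huH
      exact hlt.not_gt (buildVote_lt_of_notMem_of_mem _ H huH (ih hu'))

lemma Daux_subset (sc : ℕ → ℤ) (tb : O → ℕ) (P : List (O → ℕ)) (pt : O → ℕ) (H : Finset O)
    (k s : ℕ) : Daux sc tb P pt H k s ⊆ univ \ H := by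
  induction s with
  | zero => exact filter_subset _ _
  | succ s ih =>
    intro d hd
    simp only [Daux, mem_union, mem_filter] at hd
    rcases hd with hd | ⟨-, l, -, -, ⟨d', hd', hlt⟩, -⟩
    · exact ih hd
    · have hd'H : d' ∉ H := by simpa using ih hd'
      simp only [mem_sdiff, mem_univ, true_and]
      intro hdH
      exact hlt.not_gt (buildVote_lt_of_notMem_of_mem _ H hd'H hdH)

lemma Uaux_monotone (sc : ℕ → ℤ) (tb : O → ℕ) (P : List (O → ℕ)) (pt : O → ℕ) (H : Finset O)
    (k : ℕ) : Monotone (Uaux sc tb P pt H k) :=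
  monotone_nat_of_le_succ fun _ => subset_union_left

lemma Daux_monotone (sc : ℕ → ℤ) (tb : O → ℕ) (P : List (O → ℕ)) (pt : O → ℕ) (H : Finset O)
    (k : ℕ) : Monotone (Daux sc tb P pt H k) :=
  monotone_nat_of_le_succ fun _ => subset_union_left

lemma stageKey_lt_add_of_mem_Uset (x : ℕ) {tb : O → ℕ} (htb : Function.Injective tb) {M : ℤ}
    (hM0 : 0 < M) (hM : ∀ c, (tb c : ℤ) < M) (P : List (O → ℕ)) {pt : O → ℕ}
    (hpt : Function.Injective pt) (H : Finset O) (k : ℕ) {a b : O}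
    (ha : a ∈ Uset (approvalVec (Fintype.card O) x) tb P pt H k)
    (hb : b ∈ Uset (approvalVec (Fintype.card O) x) tb P pt H k) :
    stageKey M (approvalVec (Fintype.card O) x) tb P H k a <
      stageKey M (approvalVec (Fintype.card O) x) tb P H k b + M := by
  set sc := approvalVec (Fintype.card O) x
  simp only [Uset, mem_filter, mem_univ, true_and] at ha hb
  obtain ⟨s, hs⟩ := ha
  obtain ⟨s', hs'⟩ := hb
  have hUH := Uaux_subset sc tb P pt H k
  refine (liftsLowest_stageKey_of_mem x htb hM P H).lt_add_of_mem hM0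
    (fun t => (scoreKey_injective hM htb _ _).injOn) k (Uaux sc tb P pt H k) hUH
    (fun a ha b hb => eq_of_mem_botWithin_one hpt ha hb) ?_ (max s s')
    a (Uaux_monotone sc tb P pt H k (le_max_left s s') hs)
    b (Uaux_monotone sc tb P pt H k (le_max_right s s') hs')
  intro s a ha
  have haH := hUH _ ha
  simp only [Uaux, mem_union, mem_filter] at ha
  rcases ha with ha | ⟨-, l, hl1, hlk, ⟨b, hb, hab⟩, ⟨c, hc, hac⟩⟩
  · exact Or.inl ha
  obtain ⟨l, rfl⟩ := Nat.exists_eq_add_of_le' hl1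
  exact Or.inr ⟨l, by omega, b, hb, c, hc, Or.inl
    ⟨stageKey_lt_of_stageVote_lt hM sc P H (iff_of_true (hUH _ hb) haH) hab,
      stageKey_lt_of_stageVote_lt hM sc P H (iff_of_true haH (hUH _ hc)) hac⟩⟩

lemma stageKey_lt_add_of_mem_Dset (x : ℕ) {tb : O → ℕ} (htb : Function.Injective tb) {M : ℤ}
    (hM0 : 0 < M) (hM : ∀ c, (tb c : ℤ) < M) (P : List (O → ℕ)) {pt : O → ℕ}
    (hpt : Function.Injective pt) (H : Finset O) (k : ℕ) {a b : O}
    (ha : a ∈ Dset (approvalVec (Fintype.card O) x) tb P pt H k)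
    (hb : b ∈ Dset (approvalVec (Fintype.card O) x) tb P pt H k) :
    stageKey M (approvalVec (Fintype.card O) x) tb P H k a <
      stageKey M (approvalVec (Fintype.card O) x) tb P H k b + M := by
  set sc := approvalVec (Fintype.card O) x
  simp only [Dset, mem_filter, mem_univ, true_and] at ha hb
  obtain ⟨s, hs⟩ := ha
  obtain ⟨s', hs'⟩ := hb
  have hDH := Daux_subset sc tb P pt H k
  have hDH' : ∀ s, ∀ d ∈ Daux sc tb P pt H k s, d ∉ H := fun s d hd => by
    simpa using hDH s hd
  refine (liftsLowest_stageKey_of_notMem x htb hM P H).lt_add_of_mem hM0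
    (fun t => (scoreKey_injective hM htb _ _).injOn) k (Daux sc tb P pt H k) hDH
    (fun a ha b hb => eq_of_mem_topWithin_one hpt ha hb) ?_ (max s s')
    a (Daux_monotone sc tb P pt H k (le_max_left s s') hs)
    b (Daux_monotone sc tb P pt H k (le_max_right s s') hs')
  intro s a ha
  have haH := hDH' _ a ha
  simp only [Daux, mem_union, mem_filter] at ha
  rcases ha with ha | ⟨-, l, hl1, hlk, ⟨b, hb, hab⟩, ⟨c, hc, hac⟩⟩
  · exact Or.inl ha
  obtain ⟨l, rfl⟩ := Nat.exists_eq_add_of_le' hl1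
  exact Or.inr ⟨l, by omega, b, hb, c, hc, Or.inr
    ⟨stageKey_lt_of_stageVote_lt hM sc P H (iff_of_false haH (hDH' _ b hb)) hab,
      stageKey_lt_of_stageVote_lt hM sc P H (iff_of_false (hDH' _ c hc) haH) hac⟩⟩

lemma tb_lt_of_scoreKey_lt_add {M : ℤ} {sc : ℕ → ℤ} {tb : O → ℕ} {P : List (O → ℕ)} {a b : O}
    (h : scoreKey M sc tb P a < scoreKey M sc tb P b + M)
    (hs : score sc P a = score sc P b + 1) : tb b < tb a := by
  simp only [scoreKey, hs, mul_add, mul_one] at h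
  omega

/-- Lemma 4: at a fixed iteration `i` of Algorithm 2 with the x-approval
rule, after all `k` stages, whenever `s_k(u₁) = s_k(u₂) + 1` for `u₁, u₂ ∈ U^i`, the
tie-breaking order prefers `u₂` to `u₁`; likewise for `D^i`. -/
theorem lemma4_tiebreak
    (x : ℕ) (hx1 : 1 ≤ x) (hx2 : x < Fintype.card O)
    (tb : O → ℕ) (P : List (O → ℕ)) (po : O → ℕ) (p : O) (i k : ℕ)
    (htb : Function.Injective tb) (hP : ∀ q ∈ P, IsVote q) (hpo : IsVote po)
    (hi1 : 1 ≤ i) (hi2 : i ≤ (Fintype.card O + 1) / 2) :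
    (∀ u1 ∈ UsetAlg (approvalVec (Fintype.card O) x) tb P po p i k,
        ∀ u2 ∈ UsetAlg (approvalVec (Fintype.card O) x) tb P po p i k,
          stageScoreAlg (approvalVec (Fintype.card O) x) tb P po p i k u1 =
              stageScoreAlg (approvalVec (Fintype.card O) x) tb P po p i k u2 + 1 →
            tb u2 < tb u1) ∧
      ∀ d1 ∈ DsetAlg (approvalVec (Fintype.card O) x) tb P po p i k,
        ∀ d2 ∈ DsetAlg (approvalVec (Fintype.card O) x) tb P po p i k,
          stageScoreAlg (approvalVec (Fintype.card O) x) tb P po p i k d1 =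
              stageScoreAlg (approvalVec (Fintype.card O) x) tb P po p i k d2 + 1 →
            tb d2 < tb d1 := by
  obtain ⟨M, hM0, hM⟩ : ∃ M : ℤ, 0 < M ∧ ∀ c, (tb c : ℤ) < M :=
    ⟨univ.sup tb + 1, by positivity, fun c => by
      have := le_sup (f := tb) (mem_univ c)
      omega⟩
  have hpt := swf_injective htb hM (approvalVec (Fintype.card O) x) P
  exact ⟨fun u1 h1 u2 h2 hs => tb_lt_of_scoreKey_lt_add
      (stageKey_lt_add_of_mem_Uset x htb hM0 hM P hpt _ k h1 h2) hs,
    fun d1 h1 d2 h2 hs => tb_lt_of_scoreKey_lt_add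
      (stageKey_lt_add_of_mem_Dset x htb hM0 hM P hpt _ k h1 h2) hs⟩
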